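/- Let M be a 3×3 real symmetric matrix and a, b, m₀ real numbers with 0 < a, a‖u‖² ≤ uᵀMu ≤ b‖u‖² for all u ∈ ℝ³, and a ≤ m₀ ≤ b. Let K_r be a 4×4 real symmetric matrix and k > 0 with k‖v‖² ≤ vᵀK_r v for all v ∈ ℝ⁴. Let q : [t₀,∞) → ℝ⁴ be differentiable with ‖q(t)‖ = 1 for all t ≥ t₀, and let s : [t₀,∞) → ℝ⁴ be differentiable and satisfy the closed-loop sliding dynamics D(q(t))ṡ(t) = −C(q(t), q̇(t))s(t) − K_r s(t) for all t ≥ t₀. Then for all t ≥ t₀, ‖s(t)‖ ≤ (b/a)^{1/2} ‖s(t₀)‖ exp(−(k/b)(t − t₀)); in particular, s(t) → 0 exponentially. -/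

import Mathlib

/-!
The matrix `Q(x)` is left multiplication by the quaternion `x`, so `Q(q)` is orthogonal for unit
`q`, and `D(q) = Q(q) N Q(q)ᵀ` with the constant block matrix `N = diag(m₀, M)`. Hence `D(q)` is
symmetric and inherits the bounds `a ≤ N ≤ b`. Differentiating the orthogonality of `Q(q)` gives
`D(q) Q(q̇) Q(q)ᵀ = -Q(q) N Q(q̇)ᵀ`, so the second term of `C` is `½Ḋ` up to a skew-symmetric
matrix, where `Ḋ = Q(q̇) N Q(q)ᵀ + Q(q) N Q(q̇)ᵀ`; the gyroscopic term of `C` is itself skew. So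
`Ḋ - 2C` is skew, the energy `V = sᵀ D(q) s` satisfies `V̇ = -2 sᵀ K_r s ≤ -(2k/b) V`, and
Grönwall's inequality together with `a‖s‖² ≤ V ≤ b‖s‖²` gives the bound.
-/

open Matrix

noncomputable section

/-- Cross-product (hat) matrix of a 3-vector: `vecHat v *ᵥ u = v ×₃ u`. -/
def vecHat (v : Fin 3 → ℝ) : Matrix (Fin 3) (Fin 3) ℝ :=
  !![0, -v 2, v 1; v 2, 0, -v 0; -v 1, v 0, 0]

/-- The 4×3 matrix J(x): first row −x⃗ᵀ, lower 3×3 block x₀I₃ + x⃗^∧. -/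
def Jmat (x : Fin 4 → ℝ) : Matrix (Fin 4) (Fin 3) ℝ :=
  Matrix.of fun i j =>
    if h : i = 0 then -x j.succ
    else (x 0 • (1 : Matrix (Fin 3) (Fin 3) ℝ) + vecHat fun k => x k.succ) (i.pred h) j

/-- The 4×3 matrix L(x): first row −x⃗ᵀ, lower 3×3 block x₀I₃ − x⃗^∧. -/
def Lmat (x : Fin 4 → ℝ) : Matrix (Fin 4) (Fin 3) ℝ :=
  Matrix.of fun i j =>
    if h : i = 0 then -x j.succ
    else (x 0 • (1 : Matrix (Fin 3) (Fin 3) ℝ) - vecHat fun k => x k.succ) (i.pred h) j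

/-- The 4×4 matrix Q(x) = [x J(x)] (first column x, remaining columns J(x)). -/
def Qmat (x : Fin 4 → ℝ) : Matrix (Fin 4) (Fin 4) ℝ :=
  Matrix.of fun i j => if h : j = 0 then x i else Jmat x i (j.pred h)

/-- The 4×4 matrix W(x) = [x L(x)] (first column x, remaining columns L(x)). -/
def Wmat (x : Fin 4 → ℝ) : Matrix (Fin 4) (Fin 4) ℝ :=
  Matrix.of fun i j => if h : j = 0 then x i else Lmat x i (j.pred h)

/-- Euclidean norm on ℝ⁴: ‖x‖ = (xᵀx)^{1/2}. -/
def norm4 (x : Fin 4 → ℝ) : ℝ := Real.sqrt (x ⬝ᵥ x)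

/-- The identity quaternion 1̄ = (1,0,0,0) ∈ ℝ⁴. -/
def one4 : Fin 4 → ℝ := ![1, 0, 0, 0]

/-- Inertia-type matrix D(q) = J(q) M Jᵀ(q) + m₀ q qᵀ. -/
def Dmat (M : Matrix (Fin 3) (Fin 3) ℝ) (m₀ : ℝ) (q : Fin 4 → ℝ) :
    Matrix (Fin 4) (Fin 4) ℝ :=
  Jmat q * M * (Jmat q)ᵀ + m₀ • vecMulVec q q

/-- Coriolis-type matrix C(q,q̇) = −J(q)(Mω)^∧Jᵀ(q) − D(q)Q(q̇)Qᵀ(q), ω = 2Jᵀ(q)q̇. -/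
def Cmat (M : Matrix (Fin 3) (Fin 3) ℝ) (m₀ : ℝ) (q qd : Fin 4 → ℝ) :
    Matrix (Fin 4) (Fin 4) ℝ :=
  -(Jmat q * vecHat (M *ᵥ ((2 : ℝ) • ((Jmat q)ᵀ *ᵥ qd))) * (Jmat q)ᵀ)
    - Dmat M m₀ q * Qmat qd * (Qmat q)ᵀ

section LyapunovDecay

variable {V V' r : ℝ → ℝ} {a b c k t₀ : ℝ}

lemma le_mul_exp_of_hasDerivWithinAt_le_mul
    (hV : ∀ t ≥ t₀, HasDerivWithinAt V (V' t) (Set.Ici t₀) t)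
    (hV' : ∀ t ≥ t₀, V' t ≤ c * V t) {t : ℝ} (ht : t₀ ≤ t) :
    V t ≤ V t₀ * Real.exp (c * (t - t₀)) := by
  rw [← gronwallBound_ε0]
  refine le_gronwallBound_of_liminf_deriv_right_le (f' := V') (b := t)
    (fun τ hτ => (hV τ hτ.1).continuousWithinAt.mono Set.Icc_subset_Ici_self)
    (fun τ hτ ρ hρ => ?_) le_rfl (fun τ hτ => ?_) t (Set.right_mem_Icc.2 ht)
  · exact ((hV τ hτ.1).mono (Set.Ici_subset_Ici.2 hτ.1)).liminf_right_slope_le hρ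
  · simpa only [add_zero] using hV' τ hτ.1

lemma le_sqrt_div_mul_exp_of_lyapunov (ha : 0 < a) (hb : 0 < b) (hk : 0 ≤ k) (hr : 0 ≤ r t₀)
    (hVa : ∀ t ≥ t₀, a * r t ^ 2 ≤ V t) (hVb : ∀ t ≥ t₀, V t ≤ b * r t ^ 2)
    (hV : ∀ t ≥ t₀, HasDerivWithinAt V (V' t) (Set.Ici t₀) t)
    (hV' : ∀ t ≥ t₀, V' t ≤ -2 * (k * r t ^ 2)) {t : ℝ} (ht : t₀ ≤ t) :
    r t ≤ √(b / a) * r t₀ * Real.exp (-(k / b) * (t - t₀)) := by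
  have hrate : ∀ τ ≥ t₀, V' τ ≤ 2 * -(k / b) * V τ := fun τ hτ =>
    calc V' τ ≤ -2 * (k * r τ ^ 2) := hV' τ hτ
      _ = 2 * -(k / b) * (b * r τ ^ 2) := by field_simp
      _ ≤ 2 * -(k / b) * V τ :=
        mul_le_mul_of_nonpos_left (hVb τ hτ) (by linarith [div_nonneg hk hb.le])
  have hexp : Real.exp (2 * -(k / b) * (t - t₀)) = Real.exp (-(k / b) * (t - t₀)) ^ 2 := by
    rw [mul_assoc, ← Real.exp_nat_mul, Nat.cast_ofNat]
  have hdecay : a * r t ^ 2 ≤ b * r t₀ ^ 2 * Real.exp (-(k / b) * (t - t₀)) ^ 2 :=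
    calc a * r t ^ 2 ≤ V t := hVa t ht
      _ ≤ V t₀ * Real.exp (-(k / b) * (t - t₀)) ^ 2 :=
        hexp ▸ le_mul_exp_of_hasDerivWithinAt_le_mul hV hrate ht
      _ ≤ b * r t₀ ^ 2 * Real.exp (-(k / b) * (t - t₀)) ^ 2 := by
        gcongr
        exact hVb t₀ le_rfl
  refine le_of_sq_le_sq ?_ (by positivity)
  rw [mul_pow, mul_pow, Real.sq_sqrt (by positivity), div_mul_eq_mul_div, div_mul_eq_mul_div,
    le_div_iff₀ ha]
  linarith

end LyapunovDecay

section MatrixCalculus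

variable {𝕜 m n : Type*} [NontriviallyNormedField 𝕜] [CompleteSpace 𝕜] [Fintype n] {S : Set 𝕜}
  {t : 𝕜}

lemma hasDerivWithinAt_dotProduct {u v : 𝕜 → n → 𝕜} {u' v' : n → 𝕜}
    (hu : HasDerivWithinAt u u' S t) (hv : HasDerivWithinAt v v' S t) :
    HasDerivWithinAt (fun τ => u τ ⬝ᵥ v τ) (u t ⬝ᵥ v' + u' ⬝ᵥ v t) S t :=
  (dotProductBilin 𝕜 𝕜 : (n → 𝕜) →ₗ[𝕜] (n → 𝕜) →ₗ[𝕜] 𝕜).toContinuousBilinearMap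
    |>.hasDerivWithinAt_of_bilinear hu hv

open scoped Matrix.Norms.Elementwise in
lemma hasDerivWithinAt_mulVec [Finite m] {A : 𝕜 → Matrix m n 𝕜} {A' : Matrix m n 𝕜}
    {v : 𝕜 → n → 𝕜} {v' : n → 𝕜} (hA : HasDerivWithinAt A A' S t)
    (hv : HasDerivWithinAt v v' S t) :
    HasDerivWithinAt (fun τ => A τ *ᵥ v τ) (A t *ᵥ v' + A' *ᵥ v t) S t := by
  have := Fintype.ofFinite m
  exact (mulVecBilin 𝕜 𝕜 : Matrix m n 𝕜 →ₗ[𝕜] (n → 𝕜) →ₗ[𝕜] (m → 𝕜)).toContinuousBilinearMap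
    |>.hasDerivWithinAt_of_bilinear hA hv

lemma hasDerivWithinAt_dotProduct_mulVec_self {D : 𝕜 → Matrix n n 𝕜} {D' : Matrix n n 𝕜}
    {x : 𝕜 → n → 𝕜} {x' : n → 𝕜} (hD : HasDerivWithinAt D D' S t)
    (hx : HasDerivWithinAt x x' S t) (hsymm : (D t)ᵀ = D t) :
    HasDerivWithinAt (fun τ => x τ ⬝ᵥ (D τ *ᵥ x τ))
      (x t ⬝ᵥ (D' *ᵥ x t) + 2 * (x t ⬝ᵥ (D t *ᵥ x'))) S t := by
  have hswap : x' ⬝ᵥ (D t *ᵥ x t) = x t ⬝ᵥ (D t *ᵥ x') := by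
    rw [← dotProduct_transpose_mulVec, hsymm]
  convert hasDerivWithinAt_dotProduct hx (hasDerivWithinAt_mulVec hD hx) using 1
  rw [dotProduct_add, hswap]
  ring

lemma dotProduct_deriv_eq_zero_of_dotProduct_self_eq [NeZero (2 : 𝕜)] {u : 𝕜 → n → 𝕜}
    {u' : n → 𝕜} {c : 𝕜} (hu : HasDerivWithinAt u u' S t) (hS : UniqueDiffWithinAt 𝕜 S t)
    (ht : t ∈ S) (hc : ∀ τ ∈ S, u τ ⬝ᵥ u τ = c) : u t ⬝ᵥ u' = 0 := by
  have hconst : HasDerivWithinAt (fun τ => u τ ⬝ᵥ u τ) 0 S t :=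
    (hasDerivWithinAt_const t S c).congr hc (hc t ht)
  have hsum := hS.eq_deriv _ (hasDerivWithinAt_dotProduct hu hu) hconst
  rw [dotProduct_comm u', ← two_mul] at hsum
  exact (mul_eq_zero.1 hsum).resolve_left two_ne_zero

end MatrixCalculus

lemma dotProduct_mulVec_self_eq_zero_of_skew {n R : Type*} [Fintype n] [CommRing R]
    [IsAddTorsionFree R] {A : Matrix n n R} (hA : Aᵀ = -A) (v : n → R) : v ⬝ᵥ (A *ᵥ v) = 0 := by
  rw [← self_eq_neg, ← dotProduct_neg, ← neg_mulVec, ← hA, dotProduct_transpose_mulVec]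

section PassiveSystem

variable {n : Type*} [Fintype n]

lemma energy_deriv_eq_of_skew {D D' C K : Matrix n n ℝ} {x x' : n → ℝ}
    (hskew : (D' - (2 : ℝ) • C)ᵀ = -(D' - (2 : ℝ) • C)) (hdyn : D *ᵥ x' = -(C *ᵥ x) - K *ᵥ x) :
    x ⬝ᵥ (D' *ᵥ x) + 2 * (x ⬝ᵥ (D *ᵥ x')) = -2 * (x ⬝ᵥ (K *ᵥ x)) := by
  have hzero := dotProduct_mulVec_self_eq_zero_of_skew hskew x
  rw [sub_mulVec, smul_mulVec, dotProduct_sub, dotProduct_smul, smul_eq_mul] at hzero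
  rw [hdyn, dotProduct_sub, dotProduct_neg]
  linarith

theorem sqrt_dotProduct_self_le_of_skew {D D' C K : ℝ → Matrix n n ℝ} {x x' : ℝ → n → ℝ}
    {a b k t₀ : ℝ} (ha : 0 < a) (hb : 0 < b) (hk : 0 ≤ k)
    (hD : ∀ t ≥ t₀, HasDerivWithinAt D (D' t) (Set.Ici t₀) t)
    (hx : ∀ t ≥ t₀, HasDerivWithinAt x (x' t) (Set.Ici t₀) t)
    (hsymm : ∀ t ≥ t₀, (D t)ᵀ = D t)
    (hskew : ∀ t ≥ t₀, (D' t - (2 : ℝ) • C t)ᵀ = -(D' t - (2 : ℝ) • C t))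
    (hDa : ∀ t ≥ t₀, ∀ v, a * (v ⬝ᵥ v) ≤ v ⬝ᵥ (D t *ᵥ v))
    (hDb : ∀ t ≥ t₀, ∀ v, v ⬝ᵥ (D t *ᵥ v) ≤ b * (v ⬝ᵥ v))
    (hK : ∀ t ≥ t₀, ∀ v, k * (v ⬝ᵥ v) ≤ v ⬝ᵥ (K t *ᵥ v))
    (hdyn : ∀ t ≥ t₀, D t *ᵥ x' t = -(C t *ᵥ x t) - K t *ᵥ x t) {t : ℝ} (ht : t₀ ≤ t) :
    √(x t ⬝ᵥ x t) ≤ √(b / a) * √(x t₀ ⬝ᵥ x t₀) * Real.exp (-(k / b) * (t - t₀)) := by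
  have hsq : ∀ τ, √(x τ ⬝ᵥ x τ) ^ 2 = x τ ⬝ᵥ x τ := fun τ =>
    Real.sq_sqrt (dotProduct_self_star_nonneg (x τ))
  have henergy : ∀ τ ≥ t₀, HasDerivWithinAt (fun τ => x τ ⬝ᵥ (D τ *ᵥ x τ))
      (-2 * (x τ ⬝ᵥ (K τ *ᵥ x τ))) (Set.Ici t₀) τ := fun τ hτ =>
    energy_deriv_eq_of_skew (hskew τ hτ) (hdyn τ hτ) ▸
      hasDerivWithinAt_dotProduct_mulVec_self (hD τ hτ) (hx τ hτ) (hsymm τ hτ)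
  refine le_sqrt_div_mul_exp_of_lyapunov (r := fun τ => √(x τ ⬝ᵥ x τ)) ha hb hk
    (Real.sqrt_nonneg _) (fun τ hτ => ?_) (fun τ hτ => ?_) henergy (fun τ hτ => ?_) ht
  · simpa only [hsq] using hDa τ hτ (x τ)
  · simpa only [hsq] using hDb τ hτ (x τ)
  · simpa only [hsq] using mul_le_mul_of_nonpos_left (hK τ hτ (x τ)) (by norm_num : (-2 : ℝ) ≤ 0)

end PassiveSystem

section BodyInertia

variable {n : ℕ}

/-- The block-diagonal matrix `diag(m₀, M)`, with the scalar block at index `0`: the matrix of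
`D(q)` in the orthonormal frame formed by the columns of `Q(q)`. -/
def bodyInertia {R : Type*} [Zero R] (M : Matrix (Fin n) (Fin n) R) (m₀ : R) :
    Matrix (Fin (n + 1)) (Fin (n + 1)) R :=
  Matrix.of (Fin.cons (Fin.cons m₀ 0) fun i => Fin.cons 0 (M i))

lemma bodyInertia_transpose {R : Type*} [Zero R] (M : Matrix (Fin n) (Fin n) R) (m₀ : R) :
    (bodyInertia M m₀)ᵀ = bodyInertia Mᵀ m₀ := by
  ext i j
  cases i using Fin.cases <;> cases j using Fin.cases <;> simp [bodyInertia]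

lemma dotProduct_self_eq_tail {R : Type*} [NonUnitalNonAssocSemiring R] (y : Fin (n + 1) → R) :
    y ⬝ᵥ y = y 0 * y 0 + Fin.tail y ⬝ᵥ Fin.tail y :=
  Fin.sum_univ_succ _

lemma dotProduct_bodyInertia_mulVec {R : Type*} [CommSemiring R] (M : Matrix (Fin n) (Fin n) R)
    (m₀ : R) (y : Fin (n + 1) → R) :
    y ⬝ᵥ (bodyInertia M m₀ *ᵥ y) =
      m₀ * (y 0 * y 0) + Fin.tail y ⬝ᵥ (M *ᵥ Fin.tail y) := by
  simp [dotProduct, mulVec, bodyInertia, Fin.sum_univ_succ, Fin.tail, mul_left_comm]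

variable {M : Matrix (Fin n) (Fin n) ℝ} {a b m₀ : ℝ}

lemma le_dotProduct_bodyInertia_mulVec (hM : ∀ u, a * (u ⬝ᵥ u) ≤ u ⬝ᵥ (M *ᵥ u)) (hm₀ : a ≤ m₀)
    (y : Fin (n + 1) → ℝ) : a * (y ⬝ᵥ y) ≤ y ⬝ᵥ (bodyInertia M m₀ *ᵥ y) := by
  rw [dotProduct_bodyInertia_mulVec, dotProduct_self_eq_tail, mul_add]
  exact add_le_add (mul_le_mul_of_nonneg_right hm₀ (mul_self_nonneg _)) (hM _)

lemma dotProduct_bodyInertia_mulVec_le (hM : ∀ u, u ⬝ᵥ (M *ᵥ u) ≤ b * (u ⬝ᵥ u)) (hm₀ : m₀ ≤ b)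
    (y : Fin (n + 1) → ℝ) : y ⬝ᵥ (bodyInertia M m₀ *ᵥ y) ≤ b * (y ⬝ᵥ y) := by
  rw [dotProduct_bodyInertia_mulVec, dotProduct_self_eq_tail, mul_add]
  exact add_le_add (mul_le_mul_of_nonneg_right hm₀ (mul_self_nonneg _)) (hM _)

end BodyInertia

lemma vecHat_transpose (v : Fin 3 → ℝ) : (vecHat v)ᵀ = -vecHat v := by
  ext i j
  fin_cases i <;> fin_cases j <;> simp [vecHat]

lemma Qmat_eq (x : Fin 4 → ℝ) : Qmat x =
    !![x 0, -x 1, -x 2, -x 3; x 1, x 0, -x 3, x 2; x 2, x 3, x 0, -x 1; x 3, -x 2, x 1, x 0] := by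
  ext i j
  fin_cases i <;> fin_cases j <;>
    simp [Qmat, Jmat, vecHat, Fin.pred, Fin.subNat, Fin.succ, Matrix.one_apply]

lemma Qmat_add (x y : Fin 4 → ℝ) : Qmat (x + y) = Qmat x + Qmat y := by
  ext i j
  fin_cases i <;> fin_cases j <;> simp [Qmat_eq, add_comm]

lemma Qmat_smul (c : ℝ) (x : Fin 4 → ℝ) : Qmat (c • x) = c • Qmat x := by
  ext i j
  fin_cases i <;> fin_cases j <;> simp [Qmat_eq]

lemma Qmat_transpose_mul_add (x y : Fin 4 → ℝ) :
    (Qmat x)ᵀ * Qmat y + (Qmat y)ᵀ * Qmat x = (2 * (x ⬝ᵥ y)) • 1 := by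
  ext i j
  simp only [Qmat_eq, Matrix.add_apply, Matrix.smul_apply, transpose_apply, mul_apply,
    Fin.sum_univ_four, dotProduct]
  fin_cases i <;> fin_cases j <;> simp <;> ring

lemma Qmat_mul_transpose {q : Fin 4 → ℝ} (hq : q ⬝ᵥ q = 1) : Qmat q * (Qmat q)ᵀ = 1 := by
  have h := Qmat_transpose_mul_add q q
  rw [hq, mul_one, ← two_smul ℝ ((Qmat q)ᵀ * Qmat q)] at h
  exact mul_eq_one_comm.1 (smul_right_injective _ (two_ne_zero' ℝ) h)

lemma dotProduct_Qmat_transpose_mulVec_self {q : Fin 4 → ℝ} (hq : q ⬝ᵥ q = 1)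
    (v : Fin 4 → ℝ) :
    ((Qmat q)ᵀ *ᵥ v) ⬝ᵥ ((Qmat q)ᵀ *ᵥ v) = v ⬝ᵥ v := by
  rw [dotProduct_transpose_mulVec, mulVec_mulVec, Qmat_mul_transpose hq, one_mulVec]

lemma Qmat_transpose_mul_mul_transpose {q q' : Fin 4 → ℝ} (hq : q ⬝ᵥ q = 1) (hq' : q ⬝ᵥ q' = 0) :
    (Qmat q)ᵀ * Qmat q' * (Qmat q)ᵀ = -(Qmat q')ᵀ := by
  have hskew : (Qmat q)ᵀ * Qmat q' = -((Qmat q')ᵀ * Qmat q) := by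
    rw [eq_neg_iff_add_eq_zero, Qmat_transpose_mul_add, hq', mul_zero, zero_smul]
  rw [hskew, Matrix.neg_mul, Matrix.mul_assoc, Qmat_mul_transpose hq, Matrix.mul_one]

section InertiaMatrix

variable {M : Matrix (Fin 3) (Fin 3) ℝ} {m₀ : ℝ} {q q' : Fin 4 → ℝ}

lemma Dmat_eq (M : Matrix (Fin 3) (Fin 3) ℝ) (m₀ : ℝ) (q : Fin 4 → ℝ) :
    Dmat M m₀ q = Qmat q * bodyInertia M m₀ * (Qmat q)ᵀ := by
  ext i j
  simp only [Dmat, Qmat, bodyInertia, Matrix.add_apply, mul_apply, Matrix.smul_apply, smul_eq_mul,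
    vecMulVec_apply, transpose_apply, of_apply, Fin.sum_univ_succ (n := 3), ↓reduceDIte,
    Fin.cons_zero, Fin.cons_succ, Fin.succ_ne_zero, Fin.pred_succ, Pi.zero_apply, mul_zero,
    Finset.sum_const_zero, add_zero, zero_add]
  ring

lemma Dmat_transpose (hM : Mᵀ = M) : (Dmat M m₀ q)ᵀ = Dmat M m₀ q := by
  simp only [Dmat_eq, transpose_mul, transpose_transpose, bodyInertia_transpose, hM,
    Matrix.mul_assoc]

lemma dotProduct_Dmat_mulVec (M : Matrix (Fin 3) (Fin 3) ℝ) (m₀ : ℝ) (q v : Fin 4 → ℝ) :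
    v ⬝ᵥ (Dmat M m₀ q *ᵥ v) =
      ((Qmat q)ᵀ *ᵥ v) ⬝ᵥ (bodyInertia M m₀ *ᵥ ((Qmat q)ᵀ *ᵥ v)) := by
  rw [Dmat_eq, ← mulVec_mulVec, ← mulVec_mulVec, dotProduct_mulVec, ← mulVec_transpose]

lemma le_dotProduct_Dmat_mulVec {a : ℝ} (hM : ∀ u, a * (u ⬝ᵥ u) ≤ u ⬝ᵥ (M *ᵥ u)) (hm₀ : a ≤ m₀)
    (hq : q ⬝ᵥ q = 1) (v : Fin 4 → ℝ) : a * (v ⬝ᵥ v) ≤ v ⬝ᵥ (Dmat M m₀ q *ᵥ v) := by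
  rw [dotProduct_Dmat_mulVec, ← dotProduct_Qmat_transpose_mulVec_self hq]
  exact le_dotProduct_bodyInertia_mulVec hM hm₀ _

lemma dotProduct_Dmat_mulVec_le {b : ℝ} (hM : ∀ u, u ⬝ᵥ (M *ᵥ u) ≤ b * (u ⬝ᵥ u)) (hm₀ : m₀ ≤ b)
    (hq : q ⬝ᵥ q = 1) (v : Fin 4 → ℝ) : v ⬝ᵥ (Dmat M m₀ q *ᵥ v) ≤ b * (v ⬝ᵥ v) := by
  rw [dotProduct_Dmat_mulVec, ← dotProduct_Qmat_transpose_mulVec_self hq]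
  exact dotProduct_bodyInertia_mulVec_le hM hm₀ _

/-- The derivative `Ḋ` of `t ↦ D(q(t))` at a point where `q(t) = q` and `q̇(t) = q'`. -/
def DmatDeriv (M : Matrix (Fin 3) (Fin 3) ℝ) (m₀ : ℝ) (q q' : Fin 4 → ℝ) :
    Matrix (Fin 4) (Fin 4) ℝ :=
  Qmat q * bodyInertia M m₀ * (Qmat q')ᵀ + Qmat q' * bodyInertia M m₀ * (Qmat q)ᵀ

open scoped Matrix.Norms.Elementwise in
lemma hasDerivWithinAt_Dmat (M : Matrix (Fin 3) (Fin 3) ℝ) (m₀ : ℝ) {q : ℝ → Fin 4 → ℝ}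
    {S : Set ℝ} {t : ℝ} (hq : HasDerivWithinAt q q' S t) :
    HasDerivWithinAt (fun τ => Dmat M m₀ (q τ)) (DmatDeriv M m₀ (q t) q') S t := by
  have hbilin : IsBilinearMap ℝ fun x y => Qmat x * bodyInertia M m₀ * (Qmat y)ᵀ :=
    { add_left := by simp [Qmat_add, Matrix.add_mul]
      smul_left := by simp [Qmat_smul]
      add_right := by simp [Qmat_add, Matrix.mul_add]
      smul_right := by simp [Qmat_smul] }
  simp only [Dmat_eq]
  exact hbilin.toContinuousBilinearMap.hasDerivWithinAt_of_bilinear hq hq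

lemma Dmat_mul_Qmat_mul_transpose (hq : q ⬝ᵥ q = 1) (hq' : q ⬝ᵥ q' = 0) :
    Dmat M m₀ q * Qmat q' * (Qmat q)ᵀ = -(Qmat q * bodyInertia M m₀ * (Qmat q')ᵀ) := by
  rw [Dmat_eq, ← Matrix.mul_neg, ← Qmat_transpose_mul_mul_transpose hq hq']
  simp only [Matrix.mul_assoc]

lemma DmatDeriv_sub_two_smul_Cmat_transpose (hM : Mᵀ = M) (hq : q ⬝ᵥ q = 1) (hq' : q ⬝ᵥ q' = 0) :
    (DmatDeriv M m₀ q q' - (2 : ℝ) • Cmat M m₀ q q')ᵀ =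
      -(DmatDeriv M m₀ q q' - (2 : ℝ) • Cmat M m₀ q q') := by
  simp only [DmatDeriv, Cmat, Dmat_mul_Qmat_mul_transpose hq hq', transpose_sub, transpose_add,
    transpose_smul, transpose_neg, transpose_mul, transpose_transpose, vecHat_transpose,
    bodyInertia_transpose, hM, Matrix.mul_assoc, Matrix.mul_neg, Matrix.neg_mul]
  module

end InertiaMatrix

theorem stmt19_general (M : Matrix (Fin 3) (Fin 3) ℝ) (hM : Mᵀ = M)
    (a b m₀ : ℝ) (ha : 0 < a)
    (hMa : ∀ u : Fin 3 → ℝ, a * (u ⬝ᵥ u) ≤ u ⬝ᵥ (M *ᵥ u))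
    (hMb : ∀ u : Fin 3 → ℝ, u ⬝ᵥ (M *ᵥ u) ≤ b * (u ⬝ᵥ u))
    (ham₀ : a ≤ m₀) (hm₀b : m₀ ≤ b)
    (Kr : ℝ → Matrix (Fin 4) (Fin 4) ℝ) (k : ℝ) (hk : 0 ≤ k)
    (t₀ : ℝ)
    (hKrk : ∀ t ≥ t₀, ∀ v : Fin 4 → ℝ, k * (v ⬝ᵥ v) ≤ v ⬝ᵥ (Kr t *ᵥ v))
    (q s qd sd : ℝ → Fin 4 → ℝ)
    (hq : ∀ t ≥ t₀, HasDerivWithinAt q (qd t) (Set.Ici t₀) t)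
    (hs : ∀ t ≥ t₀, HasDerivWithinAt s (sd t) (Set.Ici t₀) t)
    (hnorm : ∀ t ≥ t₀, norm4 (q t) = 1)
    (hdyn : ∀ t ≥ t₀, Dmat M m₀ (q t) *ᵥ sd t =
      -(Cmat M m₀ (q t) (qd t) *ᵥ s t) - Kr t *ᵥ s t) :
    ∀ t ≥ t₀, norm4 (s t) ≤
      Real.sqrt (b / a) * norm4 (s t₀) * Real.exp (-(k / b) * (t - t₀)) := by
  have hunit : ∀ t ≥ t₀, q t ⬝ᵥ q t = 1 := fun t ht => Real.sqrt_eq_one.1 (hnorm t ht)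
  have htangent : ∀ t ≥ t₀, q t ⬝ᵥ qd t = 0 := fun t ht =>
    dotProduct_deriv_eq_zero_of_dotProduct_self_eq (hq t ht) (uniqueDiffOn_Ici t₀ t ht) ht hunit
  intro t ht
  exact sqrt_dotProduct_self_le_of_skew ha (ha.trans_le (ham₀.trans hm₀b)) hk
    (fun τ hτ => hasDerivWithinAt_Dmat M m₀ (hq τ hτ)) hs
    (fun τ _ => Dmat_transpose hM)
    (fun τ hτ => DmatDeriv_sub_two_smul_Cmat_transpose hM (hunit τ hτ) (htangent τ hτ))
    (fun τ hτ => le_dotProduct_Dmat_mulVec hMa ham₀ (hunit τ hτ))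
    (fun τ hτ => dotProduct_Dmat_mulVec_le hMb hm₀b (hunit τ hτ)) hKrk hdyn ht

/-- Global exponential stability of the sliding dynamics
D(q)ṡ = −C(q,q̇)s − K_r s:  ‖s(t)‖ ≤ (b/a)^{1/2}‖s(t₀)‖ e^{−(k/b)(t−t₀)}. -/
theorem stmt19 (M : Matrix (Fin 3) (Fin 3) ℝ) (hM : Mᵀ = M)
    (a b m₀ : ℝ) (ha : 0 < a)
    (hMa : ∀ u : Fin 3 → ℝ, a * (u ⬝ᵥ u) ≤ u ⬝ᵥ (M *ᵥ u))
    (hMb : ∀ u : Fin 3 → ℝ, u ⬝ᵥ (M *ᵥ u) ≤ b * (u ⬝ᵥ u))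
    (ham₀ : a ≤ m₀) (hm₀b : m₀ ≤ b)
    (Kr : Matrix (Fin 4) (Fin 4) ℝ) (hKr : Krᵀ = Kr) (k : ℝ) (hk : 0 < k)
    (hKrk : ∀ v : Fin 4 → ℝ, k * (v ⬝ᵥ v) ≤ v ⬝ᵥ (Kr *ᵥ v))
    (t₀ : ℝ) (q s qd sd : ℝ → Fin 4 → ℝ)
    (hq : ∀ t ≥ t₀, HasDerivWithinAt q (qd t) (Set.Ici t₀) t)
    (hs : ∀ t ≥ t₀, HasDerivWithinAt s (sd t) (Set.Ici t₀) t)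
    (hnorm : ∀ t ≥ t₀, norm4 (q t) = 1)
    (hdyn : ∀ t ≥ t₀, Dmat M m₀ (q t) *ᵥ sd t =
      -(Cmat M m₀ (q t) (qd t) *ᵥ s t) - Kr *ᵥ s t) :
    ∀ t ≥ t₀, norm4 (s t) ≤
      Real.sqrt (b / a) * norm4 (s t₀) * Real.exp (-(k / b) * (t - t₀)) := by
  exact stmt19_general M hM a b m₀ ha hMa hMb ham₀ hm₀b (fun _ => Kr) k hk.le t₀
    (fun _ _ => hKrk) q s qd sd hq hs hnorm hdyn
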